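/- For integers 2 ≤ d ≤ d' and n ≥ 1, E_F(α_{d'}^{⊗n}) ≤ E_F(α_d^{⊗n}); that is, the entanglement of formation of n copies of the antisymmetric state is non-increasing in the local dimension d (bipartition grouping all first tensor factors versus all second tensor factors). -/

import Mathlib

open scoped BigOperators
open Classical
open scoped ComplexOrder

noncomputable section

/-- Partial trace over the second tensor factor:
`(ptraceSnd M) a a' = ∑ b, M (a,b) (a',b)`. -/
def ptraceSnd {α β : Type*} [Fintype β] (M : Matrix (α × β) (α × β) ℂ) : Matrix α α ℂ :=
  Matrix.of fun a a' => ∑ b : β, M (a, b) (a', b)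

/-- Von Neumann entropy (in bits) of a matrix, via the eigenvalues of a Hermitian matrix
(with the convention `0 * log₂ 0 = 0`, automatic since `Real.logb 2 0 = 0`). -/
def vnEntropy {ι : Type*} [Fintype ι] [DecidableEq ι] (ρ : Matrix ι ι ℂ) : ℝ :=
  if h : ρ.IsHermitian then -∑ i, h.eigenvalues i * Real.logb 2 (h.eigenvalues i) else 0

/-- Entanglement of formation of a bipartite (density) matrix: the infimum of the average
entropy of entanglement over all finite pure-state ensembles for `ρ`. -/
def EoF {α β : Type*} [Fintype α] [DecidableEq α] [Fintype β] [DecidableEq β]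
    (ρ : Matrix (α × β) (α × β) ℂ) : ℝ :=
  sInf {E : ℝ | ∃ (k : ℕ) (p : Fin k → ℝ) (ψ : Fin k → (α × β → ℂ)),
    (∀ i, 0 ≤ p i) ∧ (∑ i, p i = 1) ∧
    (∀ i, ∑ x, Complex.normSq (ψ i x) = 1) ∧
    (∑ i, p i • Matrix.vecMulVec (ψ i) (star (ψ i)) = ρ) ∧
    E = ∑ i, p i * vnEntropy (ptraceSnd (Matrix.vecMulVec (ψ i) (star (ψ i))))}

/-- The antisymmetric projector `P₂^{(d)} = (1/2)(𝟙 - F)` on `ℂ^d ⊗ ℂ^d`. -/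
def asymProj (d : ℕ) : Matrix (Fin d × Fin d) (Fin d × Fin d) ℂ :=
  Matrix.of fun p q => (1 / 2 : ℂ) *
    ((if p.1 = q.1 ∧ p.2 = q.2 then 1 else 0) - (if p.1 = q.2 ∧ p.2 = q.1 then 1 else 0))

/-- The antisymmetric state `α_d = P₂^{(d)} / binom(d,2)`. -/
def antisymState (d : ℕ) : Matrix (Fin d × Fin d) (Fin d × Fin d) ℂ :=
  (1 / (Nat.choose d 2 : ℂ)) • asymProj d

/-- `α_d^{⊗n}`, viewed as a bipartite state on `((ℂ^d)^{⊗n})_A ⊗ ((ℂ^d)^{⊗n})_B`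
(the `n` first tensor factors grouped on the `A` side, the `n` second ones on the `B` side). -/
def alphaPow (d n : ℕ) :
    Matrix ((Fin n → Fin d) × (Fin n → Fin d)) ((Fin n → Fin d) × (Fin n → Fin d)) ℂ :=
  Matrix.of fun p q => ∏ i : Fin n, antisymState d (p.1 i, p.2 i) (q.1 i, q.2 i)

/-- `(P₂^{(d)})^{⊗n}`, viewed as an operator on `((ℂ^d)^{⊗n})_A ⊗ ((ℂ^d)^{⊗n})_B`
(the `n` first tensor factors grouped on the `A` side, the `n` second ones on the `B` side). -/
def asymPow (d n : ℕ) :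
    Matrix ((Fin n → Fin d) × (Fin n → Fin d)) ((Fin n → Fin d) × (Fin n → Fin d)) ℂ :=
  Matrix.of fun p q => ∏ i : Fin n, asymProj d (p.1 i, p.2 i) (q.1 i, q.2 i)

/-- The antisymmetrizer `P_k^{(d)} = (1/k!) ∑_{σ ∈ S_k} sgn(σ) U_σ` on `(ℂ^d)^{⊗k}`. -/
def asymProjK (d k : ℕ) : Matrix (Fin k → Fin d) (Fin k → Fin d) ℂ :=
  Matrix.of fun f g => (1 / (Nat.factorial k) : ℂ) *
    ∑ σ : Equiv.Perm (Fin k), ((Equiv.Perm.sign σ : ℤ) : ℂ) * (if f = g ∘ σ then 1 else 0)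

/-- Quantum conditional mutual information `I(A;B|E) = H(AE) + H(BE) - H(ABE) - H(E)`
(in bits) of a tripartite (density) matrix. -/
def condMutInfo {α β γ : Type*} [Fintype α] [DecidableEq α] [Fintype β] [DecidableEq β]
    [Fintype γ] [DecidableEq γ] (ρ : Matrix ((α × β) × γ) ((α × β) × γ) ℂ) : ℝ :=
  vnEntropy (Matrix.of fun p q : α × γ => ∑ b : β, ρ ((p.1, b), p.2) ((q.1, b), q.2))
  + vnEntropy (Matrix.of fun p q : β × γ => ∑ a : α, ρ ((a, p.1), p.2) ((a, q.1), q.2))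
  - vnEntropy ρ
  - vnEntropy (Matrix.of fun e e' : γ => ∑ a : α, ∑ b : β, ρ ((a, b), e) ((a, b), e'))

/-- Squashed entanglement: `E_sq(ρ_AB) = inf (1/2) I(A;B|E)` over all finite-dimensional
extensions `ρ_ABE` of `ρ_AB`. -/
def Esq {α β : Type*} [Fintype α] [DecidableEq α] [Fintype β] [DecidableEq β]
    (ρ : Matrix (α × β) (α × β) ℂ) : ℝ :=
  sInf {x : ℝ | ∃ (m : ℕ) (σ : Matrix ((α × β) × Fin m) ((α × β) × Fin m) ℂ),
    σ.PosSemidef ∧ σ.trace = 1 ∧ ptraceSnd σ = ρ ∧ x = (1 / 2) * condMutInfo σ}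

/-- The operator norm `‖·‖_∞` of a matrix, acting on Euclidean space. -/
def opNorm {ι : Type*} [Fintype ι] [DecidableEq ι] (M : Matrix ι ι ℂ) : ℝ :=
  ‖Matrix.toEuclideanCLM (𝕜 := ℂ) M‖

/-- A bipartite (density) matrix is separable if it is a finite convex combination of
product density matrices. -/
def IsSeparableMat {α β : Type*} [Fintype α] [Fintype β]
    (σ : Matrix (α × β) (α × β) ℂ) : Prop :=
  ∃ (k : ℕ) (p : Fin k → ℝ) (ρA : Fin k → Matrix α α ℂ) (ρB : Fin k → Matrix β β ℂ),
    (∀ i, 0 ≤ p i) ∧ (∑ i, p i = 1) ∧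
    (∀ i, (ρA i).PosSemidef) ∧ (∀ i, (ρA i).trace = 1) ∧
    (∀ i, (ρB i).PosSemidef) ∧ (∀ i, (ρB i).trace = 1) ∧
    σ = ∑ i, p i • Matrix.kroneckerMap (· * ·) (ρA i) (ρB i)

/-!
The entanglement of formation does not increase under random local isometries: conjugating a pure
bipartite state by `V ⊗ W` conjugates its reduced state by the isometry `V`, which only adds zeros
to the spectrum, so an ensemble for `ρ` turns into an ensemble with the same average entanglement
for `∑ w_j (V_j ⊗ W_j) ρ (V_j ⊗ W_j)ᴴ`. Being such a mixture is stable under tensor powers. Finally,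
`α_{d+1}` is the uniform mixture over `j` of the copies of `α_d` supported on the `d` basis vectors
other than `e_j`: every pair of distinct basis vectors avoids `d - 1` of the `d + 1` indices `j`,
and `(d - 1) / ((d + 1) * binom(d, 2)) = 1 / binom(d + 1, 2)`. Since `α_d^{⊗n}` is a density
matrix, its spectral decomposition shows that the infimum defining `E_F` is over a nonempty set and
is not the junk value of `sInf ∅`.
-/

open Matrix Kronecker

variable {ι κ α β γ δ : Type*}

/-! ### Density matrices and their entropy -/

/-- Density matrices (mixed states): positive semidefinite of unit trace. -/
structure IsDensityMatrix [Fintype α] (ρ : Matrix α α ℂ) : Prop where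
  posSemidef : ρ.PosSemidef
  trace_eq_one : ρ.trace = 1

lemma IsDensityMatrix.sum_eigenvalues [Fintype α] [DecidableEq α] {ρ : Matrix α α ℂ}
    (hρ : IsDensityMatrix ρ) : ∑ i, hρ.posSemidef.isHermitian.eigenvalues i = 1 := by
  have h := hρ.posSemidef.isHermitian.trace_eq_sum_eigenvalues
  rw [hρ.trace_eq_one, ← RCLike.ofReal_sum] at h
  exact RCLike.ofReal_injective (h.symm.trans RCLike.ofReal_one.symm)

lemma IsDensityMatrix.vnEntropy_nonneg [Fintype α] [DecidableEq α] {ρ : Matrix α α ℂ}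
    (hρ : IsDensityMatrix ρ) : 0 ≤ vnEntropy ρ := by
  have hnonneg := hρ.posSemidef.eigenvalues_nonneg
  rw [vnEntropy, dif_pos hρ.posSemidef.isHermitian, neg_nonneg]
  refine Finset.sum_nonpos fun i _ => mul_nonpos_of_nonneg_of_nonpos (hnonneg i) ?_
  refine Real.logb_nonpos one_lt_two (hnonneg i) ?_
  rw [← hρ.sum_eigenvalues]
  exact Finset.single_le_sum (fun j _ => hnonneg j) (Finset.mem_univ i)

lemma vnEntropy_eq_sum_roots_charpoly [Fintype α] [DecidableEq α] {ρ : Matrix α α ℂ}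
    (hρ : ρ.IsHermitian) :
    vnEntropy ρ = -(ρ.charpoly.roots.map fun z => z.re * Real.logb 2 z.re).sum := by
  rw [vnEntropy, dif_pos hρ, hρ.roots_charpoly_eq_eigenvalues, Multiset.map_map]
  rfl

/-- Conjugation by an isometry only adds zero roots to the characteristic polynomial, and these do
not contribute to the entropy. -/
lemma vnEntropy_isometry_conj [Fintype α] [DecidableEq α] [Fintype γ] [DecidableEq γ]
    {ρ : Matrix α α ℂ} (hρ : ρ.IsHermitian) {V : Matrix γ α ℂ} (hV : Vᴴ * V = 1) :
    vnEntropy (V * ρ * Vᴴ) = vnEntropy ρ := by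
  have hcharpoly : Polynomial.X ^ Fintype.card α * (V * ρ * Vᴴ).charpoly =
      Polynomial.X ^ Fintype.card γ * ρ.charpoly := by
    simpa only [Matrix.mul_assoc, hV, Matrix.mul_one] using charpoly_mul_comm' V (ρ * Vᴴ)
  have hX (k : ℕ) : (Polynomial.X : Polynomial ℂ) ^ k ≠ 0 := pow_ne_zero k Polynomial.X_ne_zero
  have hroots := congrArg Polynomial.roots hcharpoly
  rw [Polynomial.roots_mul (mul_ne_zero (hX _) (charpoly_monic _).ne_zero),
    Polynomial.roots_mul (mul_ne_zero (hX _) (charpoly_monic _).ne_zero)] at hroots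
  rw [vnEntropy_eq_sum_roots_charpoly hρ,
    vnEntropy_eq_sum_roots_charpoly (isHermitian_mul_mul_conjTranspose V hρ)]
  simpa [Multiset.map_nsmul, Multiset.sum_nsmul] using
    congrArg (fun s => (s.map fun z : ℂ => z.re * Real.logb 2 z.re).sum) hroots

/-! ### Pure states and their entanglement -/

lemma trace_vecMulVec_star [Fintype α] (ψ : α → ℂ) :
    (vecMulVec ψ (star ψ)).trace = ((∑ x, Complex.normSq (ψ x) : ℝ) : ℂ) := by
  simp [trace_vecMulVec, dotProduct, Complex.mul_conj]

lemma isDensityMatrix_vecMulVec_star [Fintype α] {ψ : α → ℂ}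
    (hψ : ∑ x, Complex.normSq (ψ x) = 1) : IsDensityMatrix (vecMulVec ψ (star ψ)) where
  posSemidef := posSemidef_vecMulVec_self_star ψ
  trace_eq_one := by rw [trace_vecMulVec_star, hψ, Complex.ofReal_one]

lemma vecMulVec_mulVec_star [Fintype α] (V : Matrix γ α ℂ) (ψ : α → ℂ) :
    vecMulVec (V *ᵥ ψ) (star (V *ᵥ ψ)) = V * vecMulVec ψ (star ψ) * Vᴴ := by
  rw [star_mulVec, ← vecMulVec_mul, ← mul_vecMulVec]

lemma sum_normSq_isometry_mulVec [Fintype α] [DecidableEq α] [Fintype γ] {V : Matrix γ α ℂ}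
    (hV : Vᴴ * V = 1) (ψ : α → ℂ) :
    ∑ x, Complex.normSq ((V *ᵥ ψ) x) = ∑ x, Complex.normSq (ψ x) := by
  rw [← Complex.ofReal_inj, ← trace_vecMulVec_star, ← trace_vecMulVec_star, vecMulVec_mulVec_star,
    trace_mul_comm, ← Matrix.mul_assoc, hV, Matrix.one_mul]

lemma posSemidef_ptraceSnd [Fintype β] {M : Matrix (α × β) (α × β) ℂ} (hM : M.PosSemidef) :
    (ptraceSnd M).PosSemidef := by
  have hsum : ptraceSnd M = ∑ b, M.submatrix (·, b) (·, b) := by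
    ext a a'
    simp [ptraceSnd, Matrix.sum_apply]
  rw [hsum]
  exact posSemidef_sum _ fun b _ => hM.submatrix _

lemma trace_ptraceSnd [Fintype α] [Fintype β] (M : Matrix (α × β) (α × β) ℂ) :
    (ptraceSnd M).trace = M.trace :=
  Fintype.sum_prod_type' (fun a b => M (a, b) (a, b)) |>.symm

lemma isDensityMatrix_ptraceSnd [Fintype α] [Fintype β] {ρ : Matrix (α × β) (α × β) ℂ}
    (hρ : IsDensityMatrix ρ) : IsDensityMatrix (ptraceSnd ρ) where
  posSemidef := posSemidef_ptraceSnd hρ.posSemidef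
  trace_eq_one := (trace_ptraceSnd ρ).trans hρ.trace_eq_one

lemma ptraceSnd_vecMulVec_vec [Fintype β] (X : Matrix β α ℂ) :
    ptraceSnd (vecMulVec (vec X) (star (vec X))) = Xᵀ * Xᵀᴴ := by
  ext a a'
  simp [ptraceSnd, mul_apply, vecMulVec_apply]

/-- The entropy of entanglement of a pure bipartite state: the entropy of its reduced state. -/
def entanglementEntropy [Fintype α] [DecidableEq α] [Fintype β] (ψ : α × β → ℂ) : ℝ :=
  vnEntropy (ptraceSnd (vecMulVec ψ (star ψ)))

lemma entanglementEntropy_nonneg [Fintype α] [DecidableEq α] [Fintype β] {ψ : α × β → ℂ}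
    (hψ : ∑ x, Complex.normSq (ψ x) = 1) : 0 ≤ entanglementEntropy ψ :=
  (isDensityMatrix_ptraceSnd (isDensityMatrix_vecMulVec_star hψ)).vnEntropy_nonneg

lemma entanglementEntropy_kronecker_mulVec [Fintype α] [DecidableEq α] [Fintype β] [DecidableEq β]
    [Fintype γ] [DecidableEq γ] [Fintype δ] {V : Matrix γ α ℂ} {W : Matrix δ β ℂ}
    (hV : Vᴴ * V = 1) (hW : Wᴴ * W = 1) (ψ : α × β → ℂ) :
    entanglementEntropy ((V ⊗ₖ W) *ᵥ ψ) = entanglementEntropy ψ := by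
  obtain ⟨X, rfl⟩ := vec_bijective.surjective ψ
  have hW' : Wᵀ * Wᵀᴴ = 1 := by
    calc Wᵀ * Wᵀᴴ = (Wᴴ * W)ᵀ := (transpose_mul _ _).symm
      _ = 1 := by rw [hW, transpose_one]
  have hreduced : (W * X * Vᵀ)ᵀ * (W * X * Vᵀ)ᵀᴴ = V * (Xᵀ * Xᵀᴴ) * Vᴴ := by
    simp only [transpose_mul, transpose_transpose, conjTranspose_mul]
    calc V * (Xᵀ * Wᵀ) * (Wᵀᴴ * Xᵀᴴ * Vᴴ)
        = V * (Xᵀ * (Wᵀ * Wᵀᴴ) * Xᵀᴴ) * Vᴴ := by simp only [Matrix.mul_assoc]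
      _ = V * (Xᵀ * Xᵀᴴ) * Vᴴ := by rw [hW', Matrix.mul_one]
  rw [kronecker_mulVec_vec, entanglementEntropy, entanglementEntropy, ptraceSnd_vecMulVec_vec,
    ptraceSnd_vecMulVec_vec, hreduced,
    vnEntropy_isometry_conj (isHermitian_mul_conjTranspose_self _) hV]

lemma kronecker_isometry [DecidableEq α] [DecidableEq β] [Fintype γ] [Fintype δ]
    {V : Matrix γ α ℂ} {W : Matrix δ β ℂ} (hV : Vᴴ * V = 1) (hW : Wᴴ * W = 1) :
    (V ⊗ₖ W)ᴴ * (V ⊗ₖ W) = 1 := by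
  rw [conjTranspose_kronecker, ← mul_kronecker_mul, hV, hW, one_kronecker_one]

/-! ### Pure-state ensembles -/

/-- The unit vectors `ψ i` with weights `p i` form an ensemble for the state `ρ`. Unlike in `EoF`,
the index type is an arbitrary finite type. -/
structure IsPureEnsemble [Fintype ι] [Fintype α] (p : ι → ℝ) (ψ : ι → α → ℂ)
    (ρ : Matrix α α ℂ) : Prop where
  nonneg : ∀ i, 0 ≤ p i
  sum_eq_one : ∑ i, p i = 1
  normalized : ∀ i, ∑ x, Complex.normSq (ψ i x) = 1
  mixture : ∑ i, p i • vecMulVec (ψ i) (star (ψ i)) = ρ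

namespace IsPureEnsemble

variable [Fintype ι] [Fintype κ] [Fintype α] {p : ι → ℝ} {ψ : ι → α → ℂ} {ρ : Matrix α α ℂ}

lemma reindex (h : IsPureEnsemble p ψ ρ) (e : κ ≃ ι) : IsPureEnsemble (p ∘ e) (ψ ∘ e) ρ where
  nonneg i := h.nonneg (e i)
  sum_eq_one := (e.sum_comp p).trans h.sum_eq_one
  normalized i := h.normalized (e i)
  mixture := (e.sum_comp fun i => p i • vecMulVec (ψ i) (star (ψ i))).trans h.mixture

lemma isometry_mixture [DecidableEq α] [Fintype γ] (h : IsPureEnsemble p ψ ρ) {w : κ → ℝ}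
    (hw : ∀ j, 0 ≤ w j) (hw1 : ∑ j, w j = 1) {V : κ → Matrix γ α ℂ}
    (hV : ∀ j, (V j)ᴴ * V j = 1) :
    IsPureEnsemble (fun x : κ × ι => w x.1 * p x.2) (fun x => V x.1 *ᵥ ψ x.2)
      (∑ j, w j • (V j * ρ * (V j)ᴴ)) where
  nonneg x := mul_nonneg (hw x.1) (h.nonneg x.2)
  sum_eq_one := by rw [Fintype.sum_prod_type, ← Fintype.sum_mul_sum, hw1, h.sum_eq_one, one_mul]
  normalized x := (sum_normSq_isometry_mulVec (hV x.1) _).trans (h.normalized x.2)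
  mixture := by
    simp only [Fintype.sum_prod_type, ← h.mixture, vecMulVec_mulVec_star, Matrix.mul_sum,
      Matrix.sum_mul, Matrix.mul_smul, Matrix.smul_mul, Finset.smul_sum, mul_smul]

end IsPureEnsemble

lemma IsDensityMatrix.isPureEnsemble_eigenvectorBasis [Fintype α] [DecidableEq α]
    {ρ : Matrix α α ℂ} (hρ : IsDensityMatrix ρ) :
    IsPureEnsemble hρ.posSemidef.isHermitian.eigenvalues
      (fun i => hρ.posSemidef.isHermitian.eigenvectorBasis i) ρ where
  nonneg := hρ.posSemidef.eigenvalues_nonneg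
  sum_eq_one := hρ.sum_eigenvalues
  normalized i := by
    have h := hρ.posSemidef.isHermitian.eigenvectorBasis.orthonormal.norm_eq_one i
    simp only [Complex.normSq_eq_norm_sq]
    rw [← EuclideanSpace.norm_sq_eq, h, one_pow]
  mixture := by
    conv_rhs => rw [hρ.posSemidef.isHermitian.spectral_theorem, Unitary.conjStarAlgAut_apply]
    ext a b
    rw [Matrix.sum_apply, mul_apply]
    refine Finset.sum_congr rfl fun i _ => ?_
    simp [mul_diagonal, vecMulVec_apply, mul_left_comm, mul_assoc]

section EntanglementOfFormation

variable [Fintype ι] [Fintype α] [DecidableEq α] [Fintype β] [DecidableEq β]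

lemma EoF_eq_sInf (ρ : Matrix (α × β) (α × β) ℂ) :
    EoF ρ = sInf {E | ∃ (k : ℕ) (p : Fin k → ℝ) (ψ : Fin k → α × β → ℂ),
      IsPureEnsemble p ψ ρ ∧ E = ∑ i, p i * entanglementEntropy (ψ i)} := by
  refine congrArg sInf (Set.ext fun E => ?_)
  constructor
  · rintro ⟨k, p, ψ, hp, hp1, hψ, hρ, hE⟩
    exact ⟨k, p, ψ, ⟨hp, hp1, hψ, hρ⟩, hE⟩
  · rintro ⟨k, p, ψ, ⟨hp, hp1, hψ, hρ⟩, hE⟩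
    exact ⟨k, p, ψ, hp, hp1, hψ, hρ, hE⟩

lemma IsPureEnsemble.EoF_le {p : ι → ℝ} {ψ : ι → α × β → ℂ} {ρ : Matrix (α × β) (α × β) ℂ}
    (h : IsPureEnsemble p ψ ρ) : EoF ρ ≤ ∑ i, p i * entanglementEntropy (ψ i) := by
  rw [EoF_eq_sInf]
  refine csInf_le ⟨0, ?_⟩ ?_
  · rintro _ ⟨k, q, φ, hφ, rfl⟩
    exact Finset.sum_nonneg fun i _ =>
      mul_nonneg (hφ.nonneg i) (entanglementEntropy_nonneg (hφ.normalized i))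
  · let e := (Fintype.equivFin ι).symm
    exact ⟨_, _, _, h.reindex e, (e.sum_comp fun i => p i * entanglementEntropy (ψ i)).symm⟩

lemma IsDensityMatrix.le_EoF {ρ : Matrix (α × β) (α × β) ℂ} (hρ : IsDensityMatrix ρ) {c : ℝ}
    (hc : ∀ (k : ℕ) (p : Fin k → ℝ) (ψ : Fin k → α × β → ℂ),
      IsPureEnsemble p ψ ρ → c ≤ ∑ i, p i * entanglementEntropy (ψ i)) : c ≤ EoF ρ := by
  rw [EoF_eq_sInf]
  refine le_csInf ⟨_, _, _, _,
    hρ.isPureEnsemble_eigenvectorBasis.reindex (Fintype.equivFin _).symm, rfl⟩ ?_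
  rintro _ ⟨k, p, ψ, h, rfl⟩
  exact hc k p ψ h

end EntanglementOfFormation

/-! ### Mixtures of local isometries -/

/-- `ρ'` arises from `ρ` by applying local isometries `V j ⊗ W j` at random, with probabilities
`w j`: the operations under which the entanglement of formation is shown not to increase. -/
def IsLocalIsometryMixture [Fintype α] [DecidableEq α] [Fintype β] [DecidableEq β]
    [Fintype γ] [Fintype δ] (ρ : Matrix (α × β) (α × β) ℂ) (ρ' : Matrix (γ × δ) (γ × δ) ℂ) :
    Prop :=
  ∃ (ι : Type) (_ : Fintype ι) (w : ι → ℝ) (V : ι → Matrix γ α ℂ) (W : ι → Matrix δ β ℂ),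
    (∀ j, 0 ≤ w j) ∧ ∑ j, w j = 1 ∧ (∀ j, (V j)ᴴ * V j = 1) ∧ (∀ j, (W j)ᴴ * W j = 1) ∧
    ∑ j, w j • ((V j ⊗ₖ W j) * ρ * (V j ⊗ₖ W j)ᴴ) = ρ'

theorem IsLocalIsometryMixture.EoF_le [Fintype α] [DecidableEq α] [Fintype β] [DecidableEq β]
    [Fintype γ] [DecidableEq γ] [Fintype δ] [DecidableEq δ]
    {ρ : Matrix (α × β) (α × β) ℂ} {ρ' : Matrix (γ × δ) (γ × δ) ℂ}
    (h : IsLocalIsometryMixture ρ ρ') (hρ : IsDensityMatrix ρ) : EoF ρ' ≤ EoF ρ := by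
  obtain ⟨ι, _, w, V, W, hw, hw1, hV, hW, rfl⟩ := h
  refine hρ.le_EoF fun k p ψ hψ => ?_
  have hens := hψ.isometry_mixture hw hw1 fun j => kronecker_isometry (hV j) (hW j)
  refine hens.EoF_le.trans_eq ?_
  calc ∑ x : ι × Fin k, w x.1 * p x.2 * entanglementEntropy ((V x.1 ⊗ₖ W x.1) *ᵥ ψ x.2)
      = ∑ x : ι × Fin k, w x.1 * (p x.2 * entanglementEntropy (ψ x.2)) :=
        Finset.sum_congr rfl fun x _ => by
          rw [entanglementEntropy_kronecker_mulVec (hV x.1) (hW x.1), mul_assoc]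
    _ = (∑ j, w j) * ∑ i, p i * entanglementEntropy (ψ i) := by
        rw [Fintype.sum_prod_type, Fintype.sum_mul_sum]
    _ = ∑ i, p i * entanglementEntropy (ψ i) := by rw [hw1, one_mul]

/-! ### Tensor powers -/

section PiKronecker

variable {R : Type*} [CommSemiring R] [Fintype κ] {l m n : κ → Type*}

/-- The Kronecker product `⨂ i, A i` of a finite family of matrices, with rows and columns indexed
by dependent functions. -/
def piKronecker (A : ∀ i, Matrix (l i) (m i) R) : Matrix (∀ i, l i) (∀ i, m i) R :=
  of fun f g => ∏ i, A i (f i) (g i)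

lemma piKronecker_one [∀ i, DecidableEq (l i)] [DecidableEq (∀ i, l i)] :
    piKronecker (fun i => (1 : Matrix (l i) (l i) R)) = 1 := by
  ext f g
  simp [piKronecker, one_apply, Fintype.prod_ite_zero, funext_iff]

lemma piKronecker_mul [DecidableEq κ] [∀ i, Fintype (m i)] (A : ∀ i, Matrix (l i) (m i) R)
    (B : ∀ i, Matrix (m i) (n i) R) :
    piKronecker (fun i => A i * B i) = piKronecker A * piKronecker B := by
  ext f g
  simp [piKronecker, mul_apply, Fintype.prod_sum, Finset.prod_mul_distrib]

lemma piKronecker_sum [DecidableEq κ] {ι : κ → Type*} [∀ i, Fintype (ι i)]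
    (A : ∀ i, ι i → Matrix (l i) (m i) R) :
    piKronecker (fun i => ∑ j, A i j) = ∑ J : ∀ i, ι i, piKronecker fun i => A i (J i) := by
  ext f g
  simp [piKronecker, Matrix.sum_apply, Fintype.prod_sum]

lemma piKronecker_smul {S : Type*} [CommMonoid S] [MulAction S R] [IsScalarTower S R R]
    [SMulCommClass S R R] (c : κ → S) (A : ∀ i, Matrix (l i) (m i) R) :
    piKronecker (fun i => c i • A i) = (∏ i, c i) • piKronecker A := by
  ext f g
  simp [piKronecker, Finset.prod_smul]

lemma conjTranspose_piKronecker [StarRing R] (A : ∀ i, Matrix (l i) (m i) R) :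
    (piKronecker A)ᴴ = piKronecker fun i => (A i)ᴴ := by
  ext f g
  simp [piKronecker]

lemma trace_piKronecker [DecidableEq κ] [∀ i, Fintype (l i)] (A : ∀ i, Matrix (l i) (l i) R) :
    (piKronecker A).trace = ∏ i, (A i).trace := by
  simp [piKronecker, trace, Fintype.prod_sum]

lemma piKronecker_kronecker_piKronecker {l' m' : κ → Type*} (A : ∀ i, Matrix (l i) (m i) R)
    (B : ∀ i, Matrix (l' i) (m' i) R) :
    piKronecker A ⊗ₖ piKronecker B = (piKronecker fun i => A i ⊗ₖ B i).submatrix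
      (Equiv.arrowProdEquivProdArrow _ _ _).symm (Equiv.arrowProdEquivProdArrow _ _ _).symm := by
  ext p q
  simp [piKronecker, Finset.prod_mul_distrib, Equiv.arrowProdEquivProdArrow]

end PiKronecker

lemma posSemidef_piKronecker [Fintype κ] {l : κ → Type*} [∀ i, Finite (l i)]
    {A : ∀ i, Matrix (l i) (l i) ℂ} (hA : ∀ i, (A i).PosSemidef) :
    (piKronecker A).PosSemidef := by
  classical
  have (i : κ) : Fintype (l i) := Fintype.ofFinite (l i)
  open scoped MatrixOrder in
  choose B hB using fun i => CStarAlgebra.nonneg_iff_eq_star_mul_self.mp (hA i).nonneg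
  rw [funext hB]
  simp only [star_eq_conjTranspose]
  rw [piKronecker_mul, ← conjTranspose_piKronecker]
  exact posSemidef_conjTranspose_mul_self _

/-- The `n`-fold tensor power of a bipartite operator, again bipartite: all first tensor factors
are grouped on one side and all second ones on the other. -/
def bipartitePow (ρ : Matrix (α × β) (α × β) ℂ) (n : ℕ) :
    Matrix ((Fin n → α) × (Fin n → β)) ((Fin n → α) × (Fin n → β)) ℂ :=
  (piKronecker fun _ => ρ).submatrix
    (Equiv.arrowProdEquivProdArrow _ _ _).symm (Equiv.arrowProdEquivProdArrow _ _ _).symm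

lemma isDensityMatrix_bipartitePow [Fintype α] [Fintype β]
    {ρ : Matrix (α × β) (α × β) ℂ} (hρ : IsDensityMatrix ρ) (n : ℕ) :
    IsDensityMatrix (bipartitePow ρ n) where
  posSemidef := (posSemidef_piKronecker fun _ => hρ.posSemidef).submatrix _
  trace_eq_one := by
    calc (bipartitePow ρ n).trace = (piKronecker fun _ : Fin n => ρ).trace :=
          (Equiv.arrowProdEquivProdArrow _ _ _).symm.sum_comp fun f => piKronecker (fun _ => ρ) f f
      _ = 1 := by rw [trace_piKronecker, hρ.trace_eq_one, Finset.prod_const_one]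

lemma bipartitePow_sum_smul_kronecker_conj [Fintype ι] [Fintype α] [Fintype β]
    (w : ι → ℝ) (V : ι → Matrix γ α ℂ) (W : ι → Matrix δ β ℂ) (ρ : Matrix (α × β) (α × β) ℂ)
    (n : ℕ) :
    bipartitePow (∑ j, w j • ((V j ⊗ₖ W j) * ρ * (V j ⊗ₖ W j)ᴴ)) n =
      ∑ J : Fin n → ι, (∏ i, w (J i)) •
        (((piKronecker fun i => V (J i)) ⊗ₖ (piKronecker fun i => W (J i))) * bipartitePow ρ n *
          ((piKronecker fun i => V (J i)) ⊗ₖ (piKronecker fun i => W (J i)))ᴴ) := by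
  simp only [bipartitePow, piKronecker_kronecker_piKronecker, conjTranspose_submatrix,
    submatrix_mul_equiv, conjTranspose_piKronecker, ← piKronecker_mul]
  rw [piKronecker_sum]
  ext p q
  simp [Matrix.sum_apply, piKronecker_smul (S := ℝ)]

theorem isLocalIsometryMixture_bipartitePow [Fintype α] [DecidableEq α] [Fintype β] [DecidableEq β]
    [Fintype γ] [Fintype δ] {ρ : Matrix (α × β) (α × β) ℂ} {ρ' : Matrix (γ × δ) (γ × δ) ℂ}
    (h : IsLocalIsometryMixture ρ ρ') (n : ℕ) :
    IsLocalIsometryMixture (bipartitePow ρ n) (bipartitePow ρ' n) := by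
  obtain ⟨ι, _, w, V, W, hw, hw1, hV, hW, rfl⟩ := h
  refine ⟨Fin n → ι, inferInstance, fun J => ∏ i, w (J i), fun J => piKronecker fun i => V (J i),
    fun J => piKronecker fun i => W (J i), fun J => Finset.prod_nonneg fun i _ => hw (J i), ?_,
    fun J => ?_, fun J => ?_, (bipartitePow_sum_smul_kronecker_conj w V W ρ n).symm⟩
  · rw [← Fintype.prod_sum fun (_ : Fin n) j => w j]
    simp [hw1]
  · simp only [conjTranspose_piKronecker, ← piKronecker_mul, hV, piKronecker_one]
  · simp only [conjTranspose_piKronecker, ← piKronecker_mul, hW, piKronecker_one]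

/-! ### Inclusions of coordinate subspaces -/

section InclusionMatrix

/-- The matrix of the linear map sending the basis vector `e_a` to `e_{f a}`. -/
def inclusionMatrix [DecidableEq γ] (f : α → γ) : Matrix γ α ℂ :=
  (1 : Matrix γ γ ℂ).submatrix id f

lemma inclusionMatrix_isometry [DecidableEq α] [Fintype γ] [DecidableEq γ] {f : α → γ}
    (hf : f.Injective) : (inclusionMatrix f)ᴴ * inclusionMatrix f = 1 := by
  rw [inclusionMatrix, conjTranspose_submatrix, conjTranspose_one,
    ← submatrix_mul _ _ _ _ _ Function.bijective_id, Matrix.mul_one, submatrix_one f hf]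

lemma inclusionMatrix_kronecker_inclusionMatrix [DecidableEq γ] [DecidableEq δ] (f : α → γ)
    (g : β → δ) : inclusionMatrix f ⊗ₖ inclusionMatrix g = inclusionMatrix (Prod.map f g) := by
  rw [inclusionMatrix, inclusionMatrix, inclusionMatrix, ← one_kronecker_one]
  rfl

lemma inclusionMatrix_conj_submatrix_apply [Fintype α] [DecidableEq γ] {f : α → γ}
    (hf : f.Injective) (M : Matrix γ γ ℂ) (c c' : γ) :
    (inclusionMatrix f * M.submatrix f f * (inclusionMatrix f)ᴴ) c c' =
      if c ∈ Set.range f ∧ c' ∈ Set.range f then M c c' else 0 := by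
  have hentry (c : γ) (a : α) : inclusionMatrix f c a = if c = f a then 1 else 0 := rfl
  simp only [mul_apply, conjTranspose_apply, hentry, submatrix_apply]
  split_ifs with h
  · obtain ⟨⟨a, rfl⟩, a', rfl⟩ := h
    simp [hf.eq_iff]
  · refine Finset.sum_eq_zero fun a' _ => ?_
    by_cases hc' : c' = f a'
    · have hc (a : α) : c ≠ f a := fun hca => h ⟨⟨a, hca.symm⟩, a', hc'.symm⟩
      simp [hc]
    · simp [hc']

end InclusionMatrix

/-! ### Antisymmetric states -/

section AntisymmetricState

variable {d : ℕ}

lemma asymProj_submatrix {d' : ℕ} {f : Fin d → Fin d'} (hf : f.Injective) :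
    (asymProj d').submatrix (Prod.map f f) (Prod.map f f) = asymProj d := by
  ext p q
  simp [asymProj, hf.eq_iff]

lemma asymProj_eq_half_smul_one_sub_swap (d : ℕ) :
    asymProj d =
      (1 / 2 : ℂ) • (1 - Equiv.Perm.permMatrix ℂ (Equiv.prodComm (Fin d) (Fin d))) := by
  ext p q
  simp [asymProj, one_apply, Prod.ext_iff, PEquiv.toMatrix_apply, and_comm, eq_comm]

lemma isStarProjection_asymProj (d : ℕ) : IsStarProjection (asymProj d) := by
  set F := Equiv.Perm.permMatrix ℂ (Equiv.prodComm (Fin d) (Fin d)) with hF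
  have hP : asymProj d = (1 / 2 : ℂ) • (1 - F) := asymProj_eq_half_smul_one_sub_swap d
  have hinv : (Equiv.prodComm (Fin d) (Fin d))⁻¹ = Equiv.prodComm (Fin d) (Fin d) := rfl
  have hFsq : F * F = 1 := by
    rw [hF, ← permMatrix_mul]
    exact permMatrix_one
  have hFstar : star F = F := by
    rw [hF, star_eq_conjTranspose, conjTranspose_permMatrix, hinv]
  refine ⟨?_, ?_⟩
  · rw [IsIdempotentElem, hP]
    simp only [smul_mul_smul_comm, sub_mul, mul_sub, hFsq, one_mul, mul_one]
    module
  · rw [IsSelfAdjoint, hP, star_smul, star_sub, star_one, hFstar]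
    simp

lemma trace_asymProj (d : ℕ) : (asymProj d).trace = d.choose 2 := by
  have hfixed : Function.fixedPoints (Equiv.prodComm (Fin d) (Fin d)) =
      Set.range fun a : Fin d => (a, a) := by
    ext ⟨a, b⟩
    simp [Function.mem_fixedPoints, Function.IsFixedPt, eq_comm]
  have hinj : Function.Injective fun a : Fin d => (a, a) := fun a b h => congrArg Prod.fst h
  rw [asymProj_eq_half_smul_one_sub_swap, trace_smul, trace_sub, trace_one, trace_permutation,
    hfixed, ← Set.image_univ, Set.ncard_image_of_injective _ hinj, Nat.cast_choose_two]
  simp only [one_div, Fintype.card_prod, Fintype.card_fin, Nat.cast_mul, Set.ncard_univ,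
    Nat.card_eq_fintype_card, smul_eq_mul]
  ring

lemma isDensityMatrix_antisymState (hd : 2 ≤ d) : IsDensityMatrix (antisymState d) where
  posSemidef := by
    open scoped MatrixOrder in
    have hpos : (asymProj d).PosSemidef :=
      nonneg_iff_posSemidef.mp (isStarProjection_asymProj d).nonneg
    exact hpos.smul (by positivity)
  trace_eq_one := by
    have hchoose : (d.choose 2 : ℂ) ≠ 0 := by exact_mod_cast (Nat.choose_pos hd).ne'
    rw [antisymState, trace_smul, trace_asymProj, smul_eq_mul, one_div_mul_cancel hchoose]

lemma fst_ne_snd_of_asymProj_ne_zero {p q : Fin d × Fin d} (h : asymProj d p q ≠ 0) :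
    p.1 ≠ p.2 := by
  contrapose! h
  simp [asymProj, h, and_comm]

lemma eq_or_eq_swap_of_asymProj_ne_zero {p q : Fin d × Fin d} (h : asymProj d p q ≠ 0) :
    q = p ∨ q = p.swap := by
  contrapose! h
  have hid : ¬(p.1 = q.1 ∧ p.2 = q.2) := fun hpq => h.1 (Prod.ext hpq.1.symm hpq.2.symm)
  have hswap : ¬(p.1 = q.2 ∧ p.2 = q.1) := fun hpq => h.2 (Prod.ext hpq.2.symm hpq.1.symm)
  rw [asymProj, of_apply, if_neg hid, if_neg hswap, sub_zero, mul_zero]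

lemma mem_range_prodMap_succAbove_iff {j : Fin (d + 1)} {p : Fin (d + 1) × Fin (d + 1)} :
    p ∈ Set.range (Prod.map j.succAbove j.succAbove) ↔ j ≠ p.1 ∧ j ≠ p.2 := by
  simp [Set.range_prodMap, Fin.range_succAbove, eq_comm]

lemma card_filter_ne_and_ne [Fintype α] [DecidableEq α] {a b : α} (hab : a ≠ b) :
    (Finset.univ.filter fun j => j ≠ a ∧ j ≠ b).card = Fintype.card α - 2 := by
  have hcompl : (Finset.univ.filter fun j => j ≠ a ∧ j ≠ b) = {a, b}ᶜ := by
    ext j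
    simp
  rw [hcompl, Finset.card_compl, Finset.card_pair hab]

lemma sum_inclusionMatrix_succAbove_conj_asymProj (d : ℕ) :
    ∑ j : Fin (d + 1), inclusionMatrix (Prod.map j.succAbove j.succAbove) * asymProj d *
      (inclusionMatrix (Prod.map j.succAbove j.succAbove))ᴴ = (d - 1 : ℂ) • asymProj (d + 1) := by
  ext p q
  have hinj (j : Fin (d + 1)) := Fin.succAbove_right_injective (p := j)
  have hentry (j : Fin (d + 1)) :
      (inclusionMatrix (Prod.map j.succAbove j.succAbove) * asymProj d *
        (inclusionMatrix (Prod.map j.succAbove j.succAbove))ᴴ) p q =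
      if (j ≠ p.1 ∧ j ≠ p.2) ∧ j ≠ q.1 ∧ j ≠ q.2 then asymProj (d + 1) p q else 0 := by
    rw [← asymProj_submatrix (hinj j),
      inclusionMatrix_conj_submatrix_apply ((hinj j).prodMap (hinj j))]
    simp only [mem_range_prodMap_succAbove_iff]
  rw [Matrix.sum_apply, Matrix.smul_apply, smul_eq_mul]
  simp only [hentry]
  by_cases hpq : asymProj (d + 1) p q = 0
  · simp [hpq]
  have hp : p.1 ≠ p.2 := fst_ne_snd_of_asymProj_ne_zero hpq
  have hq (j : Fin (d + 1)) : ((j ≠ p.1 ∧ j ≠ p.2) ∧ j ≠ q.1 ∧ j ≠ q.2) ↔ j ≠ p.1 ∧ j ≠ p.2 := by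
    rcases eq_or_eq_swap_of_asymProj_ne_zero hpq with rfl | rfl <;> simp [and_comm]
  simp only [hq]
  have hd : 1 ≤ d := by
    have hval : (p.1 : ℕ) ≠ p.2 := Fin.val_ne_of_ne hp
    omega
  have hcard : Fintype.card (Fin (d + 1)) - 2 = d - 1 := by
    rw [Fintype.card_fin]
    omega
  rw [← Finset.sum_filter, Finset.sum_const, card_filter_ne_and_ne hp, nsmul_eq_mul,
    hcard, Nat.cast_sub hd, Nat.cast_one]

lemma isLocalIsometryMixture_antisymState_succ (hd : 2 ≤ d) :
    IsLocalIsometryMixture (antisymState d) (antisymState (d + 1)) := by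
  have hisometry (j : Fin (d + 1)) :=
    inclusionMatrix_isometry (Fin.succAbove_right_injective (p := j))
  refine ⟨Fin (d + 1), inferInstance, fun _ => (1 / (d + 1) : ℝ),
    fun j => inclusionMatrix j.succAbove, fun j => inclusionMatrix j.succAbove,
    fun _ => by positivity, ?_, hisometry, hisometry, ?_⟩
  · rw [Fin.sum_const, nsmul_eq_mul, Nat.cast_add_one, mul_one_div_cancel (by positivity)]
  · have hd0 : (d : ℂ) ≠ 0 := by exact_mod_cast (by omega : d ≠ 0)
    have hd1 : (d : ℂ) - 1 ≠ 0 := sub_ne_zero.mpr (by exact_mod_cast (by omega : d ≠ 1))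
    have hd2 : (d : ℂ) + 1 ≠ 0 := by exact_mod_cast d.succ_ne_zero
    have hscalar : ((1 / (d + 1) : ℝ) : ℂ) * (1 / (d.choose 2) * (d - 1)) =
        1 / ((d + 1).choose 2) := by
      push_cast [Nat.cast_choose_two]
      rw [add_sub_cancel_right]
      field_simp
    simp only [antisymState, inclusionMatrix_kronecker_inclusionMatrix, Matrix.mul_smul,
      Matrix.smul_mul, ← Finset.smul_sum, sum_inclusionMatrix_succAbove_conj_asymProj]
    rw [← Complex.coe_smul, smul_smul, smul_smul, mul_assoc, hscalar]

end AntisymmetricState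

lemma alphaPow_eq_bipartitePow (d n : ℕ) : alphaPow d n = bipartitePow (antisymState d) n :=
  rfl

/-- For integers `2 ≤ d ≤ d'` and `n ≥ 1`,
`E_F(α_{d'}^{⊗n}) ≤ E_F(α_d^{⊗n})`. -/
theorem EoF_alphaPow_antitone (d d' n : ℕ) (hd : 2 ≤ d) (hdd : d ≤ d') (hn : 1 ≤ n) :
    EoF (alphaPow d' n) ≤ EoF (alphaPow d n) := by
  have hstep (m : ℕ) (hm : 2 ≤ m) : EoF (alphaPow (m + 1) n) ≤ EoF (alphaPow m n) := by
    simp only [alphaPow_eq_bipartitePow]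
    have hmixture := isLocalIsometryMixture_antisymState_succ hm
    exact (isLocalIsometryMixture_bipartitePow hmixture n).EoF_le
      (isDensityMatrix_bipartitePow (isDensityMatrix_antisymState hm) n)
  exact antitoneOn_nat_Ici_of_succ_le (f := fun m => EoF (alphaPow m n)) hstep hd (hd.trans hdd) hdd

end
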